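/- Let P be a set of n points in the plane in convex position and let k ≥ 1 be an integer. Then the edge set of the complete geometric graph K(P) can be partitioned into ⌈n/⌈√(2k)⌉⌉ classes such that each class, viewed as a geometric graph on P, is k-plane. -/

import Mathlib

/-- Points of the plane. -/
abbrev Pt : Type := ℝ × ℝ

/-- A finite point set is in general position if no three of its points are collinear. -/
def GenPos (P : Finset Pt) : Prop :=
  ∀ p ∈ P, ∀ q ∈ P, ∀ r ∈ P, p ≠ q → p ≠ r → q ≠ r →
    ¬ Collinear ℝ ({p, q, r} : Set Pt)

/-- A finite point set is in convex position: general position and no point lies in the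
convex hull of the others. -/
def ConvexPos (P : Finset Pt) : Prop :=
  GenPos P ∧ ∀ p ∈ P, p ∉ convexHull ℝ ((P.erase p : Finset Pt) : Set Pt)

/-- The edge set of the complete geometric graph on `P`: all unordered pairs of
distinct points of `P`. -/
def KEdges (P : Finset Pt) : Set (Sym2 Pt) :=
  {e | ∃ p ∈ P, ∃ q ∈ P, p ≠ q ∧ e = s(p, q)}

/-- Two edges cross: they share no endpoint and their open segments intersect. -/
def Cross (e f : Sym2 Pt) : Prop :=
  (∀ x, x ∈ e → x ∉ f) ∧
    ∃ p q r s : Pt, e = s(p, q) ∧ f = s(r, s) ∧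
      (openSegment ℝ p q ∩ openSegment ℝ r s).Nonempty

/-- A set of edges is `k`-plane if each of its edges crosses at most `k` other edges
of the set. -/
def KPlane (k : ℕ) (E : Set (Sym2 Pt)) : Prop :=
  ∀ e ∈ E, {f | f ∈ E ∧ Cross e f}.ncard ≤ k

/-- A set of edges is `k`-quasi-plane if it contains no `k` pairwise crossing edges. -/
def KQuasiPlane (k : ℕ) (E : Set (Sym2 Pt)) : Prop :=
  ¬ ∃ S : Finset (Sym2 Pt), ↑S ⊆ E ∧ S.card = k ∧
      (S : Set (Sym2 Pt)).Pairwise Cross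

/-- The set of crossing pairs (unordered) of a set of edges. -/
def CrossPairs (E : Set (Sym2 Pt)) : Set (Sym2 (Sym2 Pt)) :=
  {c | ∃ e ∈ E, ∃ f ∈ E, Cross e f ∧ c = s(e, f)}

/-- A crossing family in `K(P)`: a finite set of pairwise crossing edges of `K(P)`. -/
def CrossingFamily (P : Finset Pt) (S : Finset (Sym2 Pt)) : Prop :=
  ↑S ⊆ KEdges P ∧ (S : Set (Sym2 Pt)).Pairwise Cross

/-- `E` forms a spanning tree on the point set `P`: all edges are edges of `K(P)` and the
corresponding graph on the points of `P` is connected and acyclic. -/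
def IsSpanningTreeOn (P : Finset Pt) (E : Set (Sym2 Pt)) : Prop :=
  E ⊆ KEdges P ∧
    (SimpleGraph.fromRel (fun a b : {x // x ∈ P} => s((a : Pt), (b : Pt)) ∈ E)).IsTree

/-!
Number the points counterclockwise `0, …, n - 1`. The chords whose end indices have a given sum
modulo `n` are pairwise parallel in the regular `n`-gon, and a chord crosses fewer than `d` of the
chords whose sum differs from its own by `d ≥ 1`. Grouping the sums into blocks of `s` consecutive
residues gives `⌈n / s⌉` classes in which an edge crosses at most
`p.choose 2 + (s - 1 - p).choose 2 ≤ (s - 1).choose 2` others, where `p` is the position of its sum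
in the block. For `s = ⌈√(2k)⌉` this is at most `k`.
-/

section Orientation

/-- The determinant of two plane vectors: the signed area of the parallelogram they span. -/
def det2 {R : Type*} [CommRing R] (u v : R × R) : R := u.1 * v.2 - u.2 * v.1

/-- The standard inner product on `R × R` (Mathlib puts none there, and the product norm is the
sup norm). -/
def dot2 {R : Type*} [CommRing R] (u v : R × R) : R := u.1 * v.1 + u.2 * v.2

/-- The orientation determinant of three points: positive iff `a`, `b`, `c` make a
counterclockwise turn, zero iff they are collinear. -/
def orient {R : Type*} [CommRing R] (a b c : R × R) : R := det2 (b - a) (c - a)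

section CommRing

variable {R : Type*} [CommRing R]

lemma orient_rotate (a b c : R × R) : orient b c a = orient a b c := by
  simp only [orient, det2, Prod.fst_sub, Prod.snd_sub]; ring

lemma orient_swap_right (a b c : R × R) : orient a c b = -orient a b c := by
  simp only [orient, det2, Prod.fst_sub, Prod.snd_sub]; ring

lemma orient_add_orient_sub_orient (a b c d : R × R) :
    orient a b c + orient a c d - orient b c d = orient a b d := by
  simp only [orient, det2, Prod.fst_sub, Prod.snd_sub]; ring

lemma orient_self_left (a b : R × R) : orient a b a = 0 := by
  simp [orient, det2]

lemma orient_self_right (a b : R × R) : orient a b b = 0 := by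
  simp only [orient, det2]; ring

lemma orient_convexCombination (a b x y : R × R) {s t : R} (hst : s + t = 1) :
    orient a b (s • x + t • y) = s * orient a b x + t * orient a b y := by
  obtain rfl : s = 1 - t := eq_sub_of_add_eq hst
  simp only [orient, det2, Prod.fst_sub, Prod.snd_sub, Prod.fst_add, Prod.snd_add,
    Prod.smul_fst, Prod.smul_snd, smul_eq_mul]
  ring

lemma dot2_mul_det2_sub_dot2_mul_det2 (w u v : R × R) :
    dot2 w u * det2 w v - dot2 w v * det2 w u = dot2 w w * det2 u v := by
  simp only [dot2, det2]; ring

lemma orient_smul_add_orient_smul_add_orient_smul (a b c p : R × R) :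
    orient b c p • a + orient c a p • b + orient a b p • c = orient a b c • p := by
  ext <;> simp [orient, det2] <;> ring

end CommRing

variable {𝕜 : Type*} [Field 𝕜] [LinearOrder 𝕜] [IsStrictOrderedRing 𝕜]

lemma dot2_self_pos {u : 𝕜 × 𝕜} (hu : u ≠ 0) : 0 < dot2 u u := by
  have h_ne : u.1 ≠ 0 ∨ u.2 ≠ 0 := by
    by_contra! h
    exact hu (Prod.ext h.1 h.2)
  rcases h_ne with h | h
  · exact add_pos_of_pos_of_nonneg (mul_self_pos.mpr h) (mul_self_nonneg _)
  · exact add_pos_of_nonneg_of_pos (mul_self_nonneg _) (mul_self_pos.mpr h)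

lemma eq_smul_of_det2_eq_zero {u v : 𝕜 × 𝕜} (hu : u ≠ 0) (h : det2 u v = 0) :
    v = (dot2 u v / dot2 u u) • u := by
  have hpos := (dot2_self_pos hu).ne'
  rw [div_eq_inv_mul, mul_smul, eq_inv_smul_iff₀ hpos]
  simp only [det2, dot2] at h ⊢
  ext <;> simp only [Prod.smul_fst, Prod.smul_snd, smul_eq_mul]
  · linear_combination -u.2 * h
  · linear_combination u.1 * h

lemma collinear_of_orient_eq_zero {a b c : 𝕜 × 𝕜} (h : orient a b c = 0) :
    Collinear 𝕜 {a, b, c} := by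
  rcases eq_or_ne a b with rfl | hab
  · simpa using collinear_pair 𝕜 a c
  rw [collinear_iff_of_mem (p₀ := a) (by simp)]
  refine ⟨b - a, ?_⟩
  rintro p (rfl | rfl | rfl)
  · exact ⟨0, by simp⟩
  · exact ⟨1, by simp⟩
  · exact ⟨_, sub_eq_iff_eq_add.mp (eq_smul_of_det2_eq_zero (sub_ne_zero.mpr hab.symm) h)⟩

-- The orientations of the three subtriangles at `p` are its barycentric coordinates.
lemma mem_convexHull_of_orient_nonneg {a b c p : 𝕜 × 𝕜} (habc : 0 < orient a b c)
    (hab : 0 ≤ orient a b p) (hbc : 0 ≤ orient b c p) (hca : 0 ≤ orient c a p) :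
    p ∈ convexHull 𝕜 {a, b, c} := by
  have hsum : orient b c p + orient c a p + orient a b p = orient a b c := by
    simp only [orient, det2, Prod.fst_sub, Prod.snd_sub]; ring
  have hcomb : (orient b c p / orient a b c) • a + (orient c a p / orient a b c) • b +
      (orient a b p / orient a b c) • c = p := by
    simp only [div_eq_inv_mul, mul_smul, ← smul_add]
    rw [orient_smul_add_orient_smul_add_orient_smul, inv_smul_smul₀ habc.ne']
  refine mem_convexHull_of_exists_fintype
    ![orient b c p / orient a b c, orient c a p / orient a b c, orient a b p / orient a b c]
    ![a, b, c] ?_ ?_ ?_ ?_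
  · simp [Fin.forall_fin_succ, div_nonneg, habc.le, hab, hbc, hca]
  · simp [Fin.sum_univ_three, ← add_div, hsum, habc.ne']
  · simp [Fin.forall_fin_succ]
  · simpa [Fin.sum_univ_three] using hcomb

lemma disjoint_openSegment_of_orient_mul_pos {p q x y : 𝕜 × 𝕜}
    (h : 0 < orient p q x * orient p q y) :
    Disjoint (openSegment 𝕜 p q) (openSegment 𝕜 x y) := by
  rw [Set.disjoint_left]
  rintro _ ⟨a, b, -, -, hab, rfl⟩ ⟨c, d, hc, hd, hcd, heq⟩
  have hzero : c * orient p q x + d * orient p q y = 0 := by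
    rw [← orient_convexCombination p q x y hcd, heq, orient_convexCombination p q p q hab,
      orient_self_left, orient_self_right, mul_zero, mul_zero, add_zero]
  rcases mul_pos_iff.mp h with ⟨hx, hy⟩ | ⟨hx, hy⟩
  · exact (add_pos (mul_pos hc hx) (mul_pos hd hy)).ne' hzero
  · exact (add_neg (mul_neg_of_pos_of_neg hc hx) (mul_neg_of_pos_of_neg hd hy)).ne hzero

end Orientation

section AngularOrder

/-- The tangent of the directed angle from `w` to `u`. It is used only on the open half-plane
`0 < dot2 w u`, where it increases with the angle; on its boundary the division gives `0`. -/
def tanAngle {𝕜 : Type*} [Field 𝕜] (w u : 𝕜 × 𝕜) : 𝕜 := det2 w u / dot2 w u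

lemma tanAngle_lt_tanAngle_iff {𝕜 : Type*} [Field 𝕜] [LinearOrder 𝕜] [IsStrictOrderedRing 𝕜]
    {w u v : 𝕜 × 𝕜} (hu : 0 < dot2 w u) (hv : 0 < dot2 w v) :
    tanAngle w u < tanAngle w v ↔ 0 < det2 u v := by
  have hw : w ≠ 0 := by
    rintro rfl
    simp [dot2] at hu
  rw [tanAngle, tanAngle, div_lt_div_iff₀ hu hv, ← mul_pos_iff_of_pos_left (dot2_self_pos hw),
    ← dot2_mul_det2_sub_dot2_mul_det2, sub_pos, mul_comm (det2 w u), mul_comm (det2 w v)]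

/-- The key sorting points counterclockwise around `o`, with `o` itself first, provided all other
points lie in the open half-plane through `o` with inner normal `w`. -/
noncomputable def angularKey (w o p : ℝ × ℝ) : WithBot ℝ :=
  open Classical in if p = o then ⊥ else ↑(tanAngle w (p - o))

variable {w o a b : ℝ × ℝ}

lemma ne_of_angularKey_lt (h : angularKey w o a < angularKey w o b) : b ≠ o := by
  rintro rfl
  simp [angularKey] at h

lemma angularKey_lt_angularKey_iff (hao : a ≠ o) (hbo : b ≠ o) (ha : 0 < dot2 w (a - o))
    (hb : 0 < dot2 w (b - o)) : angularKey w o a < angularKey w o b ↔ 0 < orient o a b := by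
  rw [angularKey, angularKey, if_neg hao, if_neg hbo, WithBot.coe_lt_coe,
    tanAngle_lt_tanAngle_iff ha hb, orient]

lemma GenPos.injOn_angularKey {P : Finset Pt} (hP : GenPos P) (ho : o ∈ P)
    (hw : ∀ p ∈ P, p ≠ o → 0 < dot2 w (p - o)) : Set.InjOn (angularKey w o) P := by
  intro a ha b hb hab
  by_cases hao : a = o
  · by_contra hne
    have hbo : b ≠ o := fun h => hne (hao.trans h.symm)
    simp [angularKey, hao, hbo] at hab
  by_cases hbo : b = o
  · simp [angularKey, hao, hbo] at hab
  by_contra hne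
  have hle : orient o a b ≤ 0 := not_lt.mp fun h => hab.not_lt
    ((angularKey_lt_angularKey_iff hao hbo (hw a ha hao) (hw b hb hbo)).mpr h)
  have hge : orient o b a ≤ 0 := not_lt.mp fun h => hab.not_gt
    ((angularKey_lt_angularKey_iff hbo hao (hw b hb hbo) (hw a ha hao)).mpr h)
  rw [orient_swap_right] at hge
  exact hP o ho a ha b hb (Ne.symm hao) (Ne.symm hbo) hne
    (collinear_of_orient_eq_zero (by linarith))

lemma exists_dot2_sub_pos_of_notMem_convexHull {S : Set (ℝ × ℝ)} (hS : S.Finite)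
    (ho : o ∉ convexHull ℝ S) : ∃ w : ℝ × ℝ, ∀ p ∈ S, 0 < dot2 w (p - o) := by
  obtain ⟨f, u, hfo, hfS⟩ := geometric_hahn_banach_point_closed (convex_convexHull ℝ S)
    (hS.isClosed_convexHull ℝ) ho
  have hf (p : ℝ × ℝ) : dot2 (f (1, 0), f (0, 1)) p = f p := by
    have hp : p = p.1 • ((1, 0) : ℝ × ℝ) + p.2 • ((0, 1) : ℝ × ℝ) := by ext <;> simp
    conv_rhs => rw [hp, map_add, map_smul, map_smul]
    simp only [dot2, smul_eq_mul]
    ring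
  refine ⟨(f (1, 0), f (0, 1)), fun p hp => ?_⟩
  rw [hf, map_sub, sub_pos]
  exact hfo.trans (hfS p (subset_convexHull ℝ S hp))

lemma exists_equiv_fin_strictMono {α β : Type*} [LinearOrder β] {t : Finset α} {n : ℕ}
    (ht : t.card = n) {f : α → β} (hf : Set.InjOn f t) :
    ∃ v : Fin n ≃ t, StrictMono fun i => f (v i) := by
  let e : Fin n ≃ t := (t.equivFinOfCardEq ht).symm
  let v : Fin n ≃ t := (Tuple.sort fun i => f (e i)).trans e
  have hmono : Monotone fun i => f (v i) := Tuple.monotone_sort fun i => f (e i)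
  exact ⟨v, hmono.strictMono_of_injective fun i j hij =>
    v.injective (Subtype.ext (hf (v i).2 (v j).2 hij))⟩

end AngularOrder

section ConvexPolygon

/-- The points `v i`, taken in increasing order of `i`, are the vertices of a convex polygon in
counterclockwise order. -/
def IsCcw {ι : Type*} [LT ι] (v : ι → Pt) : Prop :=
  ∀ ⦃i j k⦄, i < j → j < k → 0 < orient (v i) (v j) (v k)

-- Otherwise `b` would lie in the triangle `o a c`.
lemma ConvexPos.orient_pos_of_fan {P : Finset Pt} (hP : ConvexPos P) {o a b c : Pt} (ho : o ∈ P)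
    (ha : a ∈ P) (hb : b ∈ P) (hc : c ∈ P) (hoab : 0 < orient o a b) (hobc : 0 < orient o b c) :
    0 < orient a b c := by
  by_contra! habc
  have hb_mem : b ∈ convexHull ℝ {o, a, c} := by
    apply mem_convexHull_of_orient_nonneg
    · linarith [orient_add_orient_sub_orient o a b c]
    · exact hoab.le
    · linarith [orient_swap_right a b c]
    · linarith [orient_rotate o b c, orient_rotate c o b]
  have hob : o ≠ b := by
    rintro rfl
    exact hoab.ne' (orient_self_left _ _)
  have hab : a ≠ b := by
    rintro rfl
    exact hoab.ne' (orient_self_right _ _)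
  have hcb : c ≠ b := by
    rintro rfl
    exact hobc.ne' (orient_self_right _ _)
  refine hP.2 b hb (convexHull_mono ?_ hb_mem)
  simp [Set.insert_subset_iff, ho, ha, hc, hob, hab, hcb]

theorem ConvexPos.exists_equiv_fin_isCcw {P : Finset Pt} (hP : ConvexPos P) {n : ℕ}
    (hn : P.card = n) : ∃ v : Fin n ≃ P, IsCcw fun i => (v i : Pt) := by
  rcases P.eq_empty_or_nonempty with rfl | ⟨o, ho⟩
  · subst hn
    exact ⟨(Finset.equivFin ∅).symm, fun i => i.elim0⟩
  obtain ⟨w, hw⟩ := exists_dot2_sub_pos_of_notMem_convexHull (P.erase o).finite_toSet (hP.2 o ho)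
  replace hw : ∀ p ∈ P, p ≠ o → 0 < dot2 w (p - o) := fun p hp hpo => hw p (by simp [hp, hpo])
  obtain ⟨v, hv⟩ := exists_equiv_fin_strictMono hn (hP.1.injOn_angularKey ho hw)
  have horient {a b : P} (hab : angularKey w o a < angularKey w o b) (hao : (a : Pt) ≠ o) :
      0 < orient o (a : Pt) b :=
    have hbo := ne_of_angularKey_lt hab
    (angularKey_lt_angularKey_iff hao hbo (hw a a.2 hao) (hw b b.2 hbo)).mp hab
  refine ⟨v, fun i j k hij hjk => ?_⟩
  have hjo := ne_of_angularKey_lt (hv hij)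
  have hojk : 0 < orient o (v j : Pt) (v k) := horient (hv hjk) hjo
  change 0 < orient (v i : Pt) (v j) (v k)
  by_cases hio : (v i : Pt) = o
  · rwa [hio]
  have hoij : 0 < orient o (v i : Pt) (v j) := horient (hv hij) hio
  exact hP.orient_pos_of_fan ho (v i).2 (v j).2 (v k).2 hoij hojk

lemma Cross.ne_and_not_disjoint {p q x y : Pt} (h : Cross s(p, q) s(x, y)) :
    p ≠ x ∧ p ≠ y ∧ q ≠ x ∧ q ≠ y ∧ ¬Disjoint (openSegment ℝ p q) (openSegment ℝ x y) := by
  obtain ⟨hshare, a, b, c, d, hab, hcd, hmeet⟩ := h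
  have hp := hshare p (Sym2.mem_mk_left p q)
  have hq := hshare q (Sym2.mem_mk_right p q)
  simp only [Sym2.mem_iff, not_or] at hp hq
  refine ⟨hp.1, hp.2, hq.1, hq.2, ?_⟩
  rw [Set.not_disjoint_iff_nonempty_inter]
  rcases Sym2.eq_iff.mp hab with ⟨rfl, rfl⟩ | ⟨rfl, rfl⟩ <;>
    rcases Sym2.eq_iff.mp hcd with ⟨rfl, rfl⟩ | ⟨rfl, rfl⟩ <;>
    simpa only [openSegment_symm] using hmeet

namespace IsCcw

variable {ι : Type*} [LinearOrder ι] {v : ι → Pt} {i j x y : ι}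

lemma orient_neg_of_mem_Ioo (hv : IsCcw v) (hx : x ∈ Set.Ioo i j) :
    orient (v i) (v j) (v x) < 0 := by
  rw [orient_swap_right, neg_lt_zero]
  exact hv hx.1 hx.2

lemma orient_pos_of_notMem_Icc (hv : IsCcw v) (hij : i < j) (hx : x ∉ Set.Icc i j) :
    0 < orient (v i) (v j) (v x) := by
  rcases lt_or_ge x i with hxi | hix
  · rw [orient_rotate]
    exact hv hxi hij
  · exact hv hij (not_le.mp fun hxj => hx ⟨hix, hxj⟩)

lemma interleave_of_cross (hv : IsCcw v) (hij : i < j) (h : Cross s(v i, v j) s(v x, v y)) :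
    (x ∈ Set.Ioo i j ∧ y ∉ Set.Icc i j) ∨ (y ∈ Set.Ioo i j ∧ x ∉ Set.Icc i j) := by
  obtain ⟨hix, hiy, hjx, hjy, hmeet⟩ := h.ne_and_not_disjoint
  have hIcc {z : ι} (hiz : v i ≠ v z) (hjz : v j ≠ v z) (hz : z ∉ Set.Ioo i j) :
      z ∉ Set.Icc i j := fun hmem =>
    hz ⟨hmem.1.lt_of_ne (ne_of_apply_ne v hiz), hmem.2.lt_of_ne' (ne_of_apply_ne v hjz)⟩
  by_cases hx : x ∈ Set.Ioo i j <;> by_cases hy : y ∈ Set.Ioo i j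
  · exact absurd (disjoint_openSegment_of_orient_mul_pos (mul_pos_of_neg_of_neg
      (hv.orient_neg_of_mem_Ioo hx) (hv.orient_neg_of_mem_Ioo hy))) hmeet
  · exact .inl ⟨hx, hIcc hiy hjy hy⟩
  · exact .inr ⟨hy, hIcc hix hjx hx⟩
  · exact absurd (disjoint_openSegment_of_orient_mul_pos (mul_pos
      (hv.orient_pos_of_notMem_Icc hij (hIcc hix hjx hx))
      (hv.orient_pos_of_notMem_Icc hij (hIcc hiy hjy hy)))) hmeet

end IsCcw

end ConvexPolygon

section Counting

/-- The chords `{x, y}` of a convex `n`-gon that cross its chord `{i, j}`, where `i < j`, each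
listed once, as the pair `(x, y)` whose first entry is the end strictly between `i` and `j`. -/
def crossingPairs {n : ℕ} (i j : Fin n) : Finset (Fin n × Fin n) :=
  Finset.Ioo i j ×ˢ (Finset.Icc i j)ᶜ

-- Let `d` be the difference of the two residues. If `d > 0`, then `x = i + t` and `y = j + d - t`
-- modulo `n` with `0 < t < d`; if `d < 0`, then `x = j + t` and `y = i + d - t` with `d < t < 0`.
lemma val_fst_mem_of_mem_crossingPairs {n : ℕ} {i j x y : Fin n}
    (hxy : (x, y) ∈ crossingPairs i j) :
    (x : ℕ) ∈ Finset.Ioo (i : ℕ) (i + ((x + y : Fin n) - (i + j : Fin n))) ∪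
      Finset.Ioo (j - ((i + j : Fin n) - (x + y : Fin n)) : ℕ) j := by
  simp only [crossingPairs, Finset.mem_product, Finset.mem_Ioo, Finset.mem_compl,
    Finset.mem_Icc, Fin.lt_def, Fin.le_def] at hxy
  simp only [Finset.mem_union, Finset.mem_Ioo]
  rw [Fin.val_add_eq_ite, Fin.val_add_eq_ite]
  split_ifs <;> omega

lemma card_filter_crossingPairs_add_eq_le {n : ℕ} (i j : Fin n) (r : ℕ) :
    ({z ∈ crossingPairs i j | ((z.1 + z.2 : Fin n) : ℕ) = r} : Finset _).card ≤
      Nat.dist r (i + j : Fin n) - 1 := by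
  have : NeZero n := Fin.neZero i
  set r₀ : ℕ := ((i + j : Fin n) : ℕ)
  calc
    _ ≤ (Finset.Ioo (i : ℕ) (i + (r - r₀)) ∪ Finset.Ioo (j - (r₀ - r)) (j : ℕ)).card := by
      refine Finset.card_le_card_of_injOn (fun z => (z.1 : ℕ)) ?_ ?_
      · rintro ⟨x, y⟩ hz
        obtain ⟨hxy, rfl⟩ := Finset.mem_filter.mp hz
        exact val_fst_mem_of_mem_crossingPairs hxy
      · rintro ⟨x, y⟩ hz ⟨x', y'⟩ hz' hx
        obtain rfl : x = x' := Fin.ext hx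
        have hsum : x + y = x + y' :=
          Fin.ext ((Finset.mem_filter.mp hz).2.trans (Finset.mem_filter.mp hz').2.symm)
        rw [add_left_cancel hsum]
    _ ≤ (r - r₀ - 1) + (r₀ - r - 1) := by
      refine (Finset.card_union_le _ _).trans ?_
      simp only [Nat.card_Ioo]
      omega
    _ ≤ Nat.dist r r₀ - 1 := by
      simp only [Nat.dist]
      omega

lemma sum_range_dist_sub_one_le {p s : ℕ} (hp : p < s) :
    ∑ q ∈ Finset.range s, (Nat.dist q p - 1) ≤ (s - 1).choose 2 := by
  have hchoose (m : ℕ) : m.choose 2 + m = (m + 1).choose 2 := by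
    rw [Nat.choose_succ_succ' m 1, Nat.choose_one_right, add_comm]
  induction s with
  | zero => omega
  | succ s ih =>
    rw [Finset.sum_range_succ, Nat.add_sub_cancel]
    rcases Nat.lt_succ_iff_lt_or_eq.mp hp with hps | rfl
    · calc
        _ ≤ (s - 1).choose 2 + (s - 1) := by
          gcongr
          · exact ih hps
          · simp only [Nat.dist]
            omega
        _ = s.choose 2 := by rw [hchoose, Nat.sub_add_cancel (by omega)]
    · apply le_of_eq
      calc
        _ = ∑ q ∈ Finset.range p, (p - 1 - q) := by
          rw [Nat.dist_self, Nat.zero_sub, add_zero]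
          refine Finset.sum_congr rfl fun q hq => ?_
          rw [Nat.dist_eq_sub_of_le (Finset.mem_range.mp hq).le]
          omega
        _ = p.choose 2 := by
          rw [Finset.sum_range_reflect (fun q => q), Finset.sum_range_id, Nat.choose_two_right]

lemma card_filter_crossingPairs_add_div_eq_le {n s : ℕ} (hs : 0 < s) (i j : Fin n) :
    ({z ∈ crossingPairs i j | ((z.1 + z.2 : Fin n) : ℕ) / s = ((i + j : Fin n) : ℕ) / s} :
      Finset _).card ≤ (s - 1).choose 2 := by
  set r₀ : ℕ := ((i + j : Fin n) : ℕ)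
  set c := r₀ / s
  have hr₀_eq : c * s + r₀ % s = r₀ := Nat.div_add_mod' r₀ s
  calc
    _ = ∑ r ∈ Finset.Ico (c * s) (c * s + s),
        ({z ∈ {z ∈ crossingPairs i j | ((z.1 + z.2 : Fin n) : ℕ) / s = c} |
          ((z.1 + z.2 : Fin n) : ℕ) = r} : Finset _).card := by
      refine Finset.card_eq_sum_card_fiberwise fun z hz => ?_
      have hz := (Nat.div_eq_iff hs).mp (Finset.mem_filter.mp hz).2
      simp only [Finset.coe_Ico, Set.mem_Ico]
      omega
    _ ≤ ∑ r ∈ Finset.Ico (c * s) (c * s + s), (Nat.dist r r₀ - 1) := by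
      gcongr with r
      refine le_trans ?_ (card_filter_crossingPairs_add_eq_le i j r)
      gcongr
      exact Finset.filter_subset _ _
    _ = ∑ q ∈ Finset.range s, (Nat.dist q (r₀ % s) - 1) := by
      rw [Finset.sum_Ico_eq_sum_range, Nat.add_sub_cancel_left]
      refine Finset.sum_congr rfl fun q _ => ?_
      rw [← Nat.dist_add_add_left (c * s) q, hr₀_eq]
    _ ≤ (s - 1).choose 2 := sum_range_dist_sub_one_le (Nat.mod_lt _ hs)

lemma choose_two_ceil_sqrt_sub_one_le (k : ℕ) :
    (⌈Real.sqrt (2 * k)⌉₊ - 1).choose 2 ≤ k := by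
  set m := ⌈Real.sqrt (2 * k)⌉₊ - 1
  have hm : (m : ℝ) ≤ Real.sqrt (2 * k) := by
    rcases Nat.eq_zero_or_pos m with h0 | hpos
    · simp [h0]
    · exact (Nat.lt_ceil.mp (by omega)).le
  have hsq : m ^ 2 ≤ 2 * k := by
    exact_mod_cast (Real.le_sqrt m.cast_nonneg (by positivity)).mp hm
  rw [Nat.choose_two_right]
  apply Nat.div_le_of_le_mul
  calc
    m * (m - 1) ≤ m * m := by gcongr; omega
    _ = m ^ 2 := (sq m).symm
    _ ≤ 2 * k := hsq

end Counting

section SumClasses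

/-- The class of colour `c`: the edges `{v i, v j}` for which `i + j`, reduced modulo `n`, lies in
the `c`-th block of `s` consecutive residues. Addition in `Fin n` is modulo `n`. -/
def sumClass {n : ℕ} (v : Fin n → Pt) (s c : ℕ) : Set (Sym2 Pt) :=
  {e | ∃ i j : Fin n, i < j ∧ e = s(v i, v j) ∧ ((i + j : Fin n) : ℕ) / s = c}

variable {n : ℕ}

lemma KPlane.mono {k l : ℕ} {E : Set (Sym2 Pt)} (hE : KPlane k E) (hkl : k ≤ l) : KPlane l E :=
  fun e he => (hE e he).trans hkl

lemma iUnion_sumClass {P : Finset Pt} (v : Fin n ≃ P) {m s : ℕ} (hn : n ≤ m * s) :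
    ⋃ c : Fin m, sumClass (fun i => (v i : Pt)) s c = KEdges P := by
  ext e
  simp only [Set.mem_iUnion]
  constructor
  · rintro ⟨c, i, j, hij, rfl, -⟩
    exact ⟨v i, (v i).2, v j, (v j).2, fun h => hij.ne (v.injective (Subtype.ext h)), rfl⟩
  · rintro ⟨p, hp, q, hq, hpq, rfl⟩
    obtain ⟨i, hi⟩ := v.surjective ⟨p, hp⟩
    obtain ⟨j, hj⟩ := v.surjective ⟨q, hq⟩
    have hcolour : ((i + j : Fin n) : ℕ) / s < m :=
      Nat.div_lt_of_lt_mul ((i + j).isLt.trans_le (by rwa [mul_comm]))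
    refine ⟨⟨_, hcolour⟩, ?_⟩
    have hij : i ≠ j := by
      rintro rfl
      exact hpq (congrArg Subtype.val (hi.symm.trans hj))
    rcases hij.lt_or_gt with hij | hji
    · exact ⟨i, j, hij, by simp [hi, hj], rfl⟩
    · exact ⟨j, i, hji, by simp [hi, hj, Sym2.eq_swap], by rw [add_comm j i]⟩

lemma disjoint_sumClass {v : Fin n → Pt} (hv : Function.Injective v) (s : ℕ) {c d : ℕ}
    (hcd : c ≠ d) : Disjoint (sumClass v s c) (sumClass v s d) := by
  rw [Set.disjoint_left]
  rintro _ ⟨i, j, hij, rfl, hc⟩ ⟨i', j', hij', heq, hd⟩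
  rcases Sym2.eq_iff.mp heq with ⟨hi, hj⟩ | ⟨hi, hj⟩
  · rw [hv hi, hv hj] at hc
    exact hcd (hc.symm.trans hd)
  · rw [hv hi, hv hj] at hij
    exact hij.asymm hij'

lemma IsCcw.kPlane_sumClass {v : Fin n → Pt} (hv : IsCcw v) {s : ℕ} (hs : 0 < s) (c : ℕ) :
    KPlane ((s - 1).choose 2) (sumClass v s c) := by
  classical
  rintro _ ⟨i, j, hij, rfl, rfl⟩
  set pairs : Finset (Fin n × Fin n) :=
    {z ∈ crossingPairs i j | ((z.1 + z.2 : Fin n) : ℕ) / s = ((i + j : Fin n) : ℕ) / s}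
  have hsub : {f | f ∈ sumClass v s (((i + j : Fin n) : ℕ) / s) ∧ Cross s(v i, v j) f} ⊆
      (pairs.image fun z => s(v z.1, v z.2) : Finset (Sym2 Pt)) := by
    rintro _ ⟨⟨x, y, -, rfl, hsum⟩, hcross⟩
    rw [Finset.coe_image]
    rcases hv.interleave_of_cross hij hcross with ⟨hx, hy⟩ | ⟨hy, hx⟩
    · exact ⟨(x, y), by simp_all [pairs, crossingPairs], rfl⟩
    · rw [add_comm x y] at hsum
      exact ⟨(y, x), by simp_all [pairs, crossingPairs], Sym2.eq_swap⟩
  calc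
    _ ≤ _ := Set.ncard_le_ncard hsub (Finset.finite_toSet _)
    _ = (pairs.image fun z => s(v z.1, v z.2)).card := Set.ncard_coe_finset _
    _ ≤ pairs.card := Finset.card_image_le
    _ ≤ (s - 1).choose 2 := card_filter_crossingPairs_add_div_eq_le hs i j

theorem ConvexPos.exists_partition_kPlane {P : Finset Pt} (hP : ConvexPos P) {m s : ℕ}
    (hs : 0 < s) (hcard : P.card ≤ m * s) :
    ∃ F : Fin m → Set (Sym2 Pt), (⋃ i, F i) = KEdges P ∧
      (Pairwise fun i j => Disjoint (F i) (F j)) ∧ ∀ i, KPlane ((s - 1).choose 2) (F i) := by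
  obtain ⟨v, hv⟩ := hP.exists_equiv_fin_isCcw rfl
  have hinj : Function.Injective fun i => (v i : Pt) := Subtype.val_injective.comp v.injective
  exact ⟨fun c => sumClass (fun i => (v i : Pt)) s c, iUnion_sumClass v hcard,
    fun c d hcd => disjoint_sumClass hinj s (Fin.val_ne_of_ne hcd),
    fun c => hv.kPlane_sumClass hs c⟩

end SumClasses

/-- For `n` points in convex position and `k ≥ 1`, `K(P)` can be partitioned
into `⌈n / ⌈√(2k)⌉⌉` classes each of which is `k`-plane. -/
theorem stmt_3 (n : ℕ) (P : Finset Pt) (hP : ConvexPos P) (hcard : P.card = n)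
    (k : ℕ) (hk : 1 ≤ k) :
    ∃ F : Fin (⌈(n : ℝ) / (⌈Real.sqrt (2 * k)⌉₊ : ℝ)⌉₊) → Set (Sym2 Pt),
      (⋃ i, F i) = KEdges P ∧
      (Pairwise fun i j => Disjoint (F i) (F j)) ∧
      (∀ i, KPlane k (F i)) := by
  set s := ⌈Real.sqrt (2 * k)⌉₊
  have hs : 0 < s := Nat.ceil_pos.mpr (Real.sqrt_pos.mpr (mul_pos two_pos (Nat.cast_pos.mpr hk)))
  have hn : P.card ≤ ⌈(n : ℝ) / s⌉₊ * s := by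
    have hle := (div_le_iff₀ (Nat.cast_pos.mpr hs)).mp (Nat.le_ceil ((n : ℝ) / s))
    rw [hcard]
    exact_mod_cast hle
  obtain ⟨F, hunion, hdisjoint, hplane⟩ := hP.exists_partition_kPlane hs hn
  exact ⟨F, hunion, hdisjoint, fun i => (hplane i).mono (choose_two_ceil_sqrt_sub_one_le k)⟩
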